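/- Let 𝒳 be a finite-dimensional real inner product space, β ≥ 0, A, B : 𝒳 ⇉ 𝒳 maximal β-strongly monotone with (A+B)⁻¹(0) ≠ ∅, γ > 0, θ₀ := 1 + γβ/2, θ̃ := min{θ, θ₀}, and assume θ ∈ (0, 2θ₀]. Let {(u_k, v_k, x_k)} be generated by the relaxed PR splitting method from x₀ and set x̃_k := x_{k−1} + θ̃(v_k − u_k). Then the sequences {(u_k, v_k, x_k)} and {(u_k, v_k, x̃_k)} are bounded. -/

import Mathlib

open RealInnerProductSpace Filter Pointwise

/-- The inner product on the triple product space `𝒵 = 𝒳 × 𝒳 × 𝒳`. -/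
noncomputable def inner3 {X : Type*} [NormedAddCommGroup X] [InnerProductSpace ℝ X]
    (z z' : X × X × X) : ℝ :=
  ⟪z.1, z'.1⟫ + ⟪z.2.1, z'.2.1⟫ + ⟪z.2.2, z'.2.2⟫

/-- The linear map `ℒ_θ̃(u,v,x) := ((1−θ̃)u + θ̃v − x, (θ̃−2)u + (1−θ̃)v + x, u − v)`. -/
def Lmap {X : Type*} [NormedAddCommGroup X] [InnerProductSpace ℝ X]
    (θ : ℝ) (z : X × X × X) : X × X × X :=
  ((1 - θ) • z.1 + θ • z.2.1 - z.2.2,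
    (θ - 2) • z.1 + (1 - θ) • z.2.1 + z.2.2,
    z.1 - z.2.1)

/-- The operator `(ℒ_θ̃ + γC)(u,v,x)` where `C(u,v,x) := A(u) × B(v) × {0}`. -/
def LC {X : Type*} [NormedAddCommGroup X] [InnerProductSpace ℝ X]
    (θ γ : ℝ) (A B : X → Set X) (z : X × X × X) : Set (X × X × X) :=
  {rr | ∃ a ∈ A z.1, ∃ b ∈ B z.2.1, rr = Lmap θ z + γ • ((a, b, (0 : X)) : X × X × X)}

/-- `T : 𝒳 ⇉ 𝒳` is β-strongly monotone (β = 0 meaning just monotone). -/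
def StrMono {X : Type*} [NormedAddCommGroup X] [InnerProductSpace ℝ X]
    (β : ℝ) (T : X → Set X) : Prop :=
  ∀ x x' w w' : X, w ∈ T x → w' ∈ T x' → β * ‖x - x'‖ ^ 2 ≤ ⟪w - w', x - x'⟫

/-- `T : 𝒳 ⇉ 𝒳` is maximal β-strongly monotone: it is β-strongly monotone and its graph
is not properly contained in the graph of another monotone operator. -/
def MaxStrMono {X : Type*} [NormedAddCommGroup X] [InnerProductSpace ℝ X]
    (β : ℝ) (T : X → Set X) : Prop :=
  StrMono β T ∧ ∀ T' : X → Set X, StrMono 0 T' → (∀ x, T x ⊆ T' x) → T' = T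

/-- Monotonicity of an operator on the triple product space `𝒵 = 𝒳³`. -/
def Mono3 {X : Type*} [NormedAddCommGroup X] [InnerProductSpace ℝ X]
    (T : (X × X × X) → Set (X × X × X)) : Prop :=
  ∀ z z' t t', t ∈ T z → t' ∈ T z' → 0 ≤ inner3 (z - z') (t - t')

/-- Maximal monotonicity of an operator on the triple product space `𝒵 = 𝒳³`. -/
def MaxMono3 {X : Type*} [NormedAddCommGroup X] [InnerProductSpace ℝ X]
    (T : (X × X × X) → Set (X × X × X)) : Prop :=
  Mono3 T ∧ ∀ T', Mono3 T' → (∀ z, T z ⊆ T' z) → T' = T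

/-- The ε-enlargement `T^[ε]` of an operator on `𝒳`. -/
def epsEnlX {X : Type*} [NormedAddCommGroup X] [InnerProductSpace ℝ X]
    (T : X → Set X) (ε : ℝ) (z : X) : Set X :=
  {t | ∀ z' t' : X, t' ∈ T z' → -ε ≤ ⟪t - t', z - z'⟫}

/-- The relaxed Peaceman–Rachford splitting method with relaxation parameter `θ` and
scaling `γ`: for `k ≥ 1`, `u_k = J_{γA}(x_{k−1})`, `v_k = J_{γB}(2u_k − x_{k−1})`
(expressed through resolvent inclusions) and `x_k = x_{k−1} + θ(v_k − u_k)`. -/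
structure RPR {X : Type*} [NormedAddCommGroup X] [InnerProductSpace ℝ X]
    (A B : X → Set X) (γ θ : ℝ) (x u v : ℕ → X) : Prop where
  resA : ∀ k, 1 ≤ k → x (k - 1) - u k ∈ γ • A (u k)
  resB : ∀ k, 1 ≤ k → (2 : ℝ) • u k - x (k - 1) - v k ∈ γ • B (v k)
  step : ∀ k, 1 ≤ k → x k = x (k - 1) + θ • (v k - u k)

/-!
With `q_k := u_k - v_k`, the method reads `x_k = x_{k-1} - θ q_k`. Resolvents of `γβ`-strongly
monotone operators are `(1 + γβ)`-cocoercive, and combining the two resolvents with the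
parallelogram law shows that `x_{k-1} ↦ q_k` is `(1 + γβ/2)`-cocoercive. Hence
`x_{k-1} ↦ x_k` is nonexpansive for `0 ≤ θ ≤ 2(1 + γβ/2)`. A zero `p` of `A + B`, with
`a ∈ A p` and `-a ∈ B p`, gives the stationary trajectory `x = p + γa`, `u = v = p`, and the
distance of `x_k` to `p + γa` is nonincreasing, hence bounded. Cocoercivity carries the bound
over to `u_k` and `q_k`, and so to `v_k` and to `x_{k-1} - τ q_k` for every real `τ`.
-/

section Cocoercivity

variable {X : Type*} [SeminormedAddCommGroup X] [InnerProductSpace ℝ X]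

lemma mul_norm_le_norm_of_mul_norm_sq_le_inner {c : ℝ} {y r : X}
    (h : c * ‖r‖ ^ 2 ≤ ⟪y, r⟫) : c * ‖r‖ ≤ ‖y‖ := by
  rcases (norm_nonneg r).eq_or_lt with hr | hr
  · simp [← hr]
  · refine le_of_mul_le_mul_right ?_ hr
    calc c * ‖r‖ * ‖r‖ = c * ‖r‖ ^ 2 := by ring
      _ ≤ ⟪y, r⟫ := h
      _ ≤ ‖y‖ * ‖r‖ := real_inner_le_norm y r

lemma norm_sub_smul_le_norm_of_mul_norm_sq_le_inner {c θ : ℝ} {y r : X}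
    (h : c * ‖r‖ ^ 2 ≤ ⟪y, r⟫) (hθ : 0 ≤ θ) (hθc : θ ≤ 2 * c) : ‖y - θ • r‖ ≤ ‖y‖ := by
  rw [← sq_le_sq₀ (norm_nonneg _) (norm_nonneg _)]
  have hdrop : 0 ≤ θ * (2 * c - θ) * ‖r‖ ^ 2 :=
    mul_nonneg (mul_nonneg hθ (sub_nonneg.2 hθc)) (sq_nonneg _)
  calc ‖y - θ • r‖ ^ 2 = ‖y‖ ^ 2 - 2 * (θ * ⟪y, r⟫) + θ ^ 2 * ‖r‖ ^ 2 := by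
        rw [norm_sub_sq_real, real_inner_smul_right, norm_smul, mul_pow, Real.norm_eq_abs, sq_abs]
    _ ≤ ‖y‖ ^ 2 - 2 * (θ * (c * ‖r‖ ^ 2)) + θ ^ 2 * ‖r‖ ^ 2 := by gcongr
    _ ≤ ‖y‖ ^ 2 := by linarith

end Cocoercivity

section Trajectories

variable {X : Type*} [NormedAddCommGroup X] [InnerProductSpace ℝ X]

namespace StrMono

variable {β : ℝ} {S T : X → Set X} {y y' u u' v v' : X}

lemma smul (hT : StrMono β T) {γ : ℝ} (hγ : 0 ≤ γ) : StrMono (γ * β) (γ • T) := by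
  rintro x x' _ _ ⟨w, hw, rfl⟩ ⟨w', hw', rfl⟩
  rw [← smul_sub, real_inner_smul_left, mul_assoc]
  exact mul_le_mul_of_nonneg_left (hT x x' w w' hw hw') hγ

lemma resolvent_cocoercive (hT : StrMono β T) (hu : y - u ∈ T u) (hu' : y' - u' ∈ T u') :
    (1 + β) * ‖u - u'‖ ^ 2 ≤ ⟪y - y', u - u'⟫ := by
  have h := hT u u' _ _ hu hu'
  rw [sub_sub_sub_comm, inner_sub_left, real_inner_self_eq_norm_sq] at h
  linarith

lemma splitting_residual_cocoercive (hS : StrMono β S) (hT : StrMono β T) (hβ : 0 ≤ β)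
    (hu : y - u ∈ S u) (hu' : y' - u' ∈ S u')
    (hv : (2 : ℝ) • u - y - v ∈ T v) (hv' : (2 : ℝ) • u' - y' - v' ∈ T v') :
    (1 + β / 2) * ‖(u - v) - (u' - v')‖ ^ 2 ≤ ⟪y - y', (u - v) - (u' - v')⟫ := by
  have hU := hS.resolvent_cocoercive hu hu'
  have hV := hT.resolvent_cocoercive hv hv'
  rw [sub_sub_sub_comm, ← smul_sub, inner_sub_left, real_inner_smul_left] at hV
  rw [sub_sub_sub_comm, inner_sub_right]
  have hsub := norm_sub_sq_real (u - u') (v - v')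
  have hparallelogram :
      ‖(u - u') - (v - v')‖ ^ 2 ≤ 2 * (‖u - u'‖ ^ 2 + ‖v - v'‖ ^ 2) := by
    linarith [parallelogram_law_with_norm ℝ (u - u') (v - v'),
      mul_self_nonneg ‖(u - u') + (v - v')‖]
  linarith [mul_le_mul_of_nonneg_left hparallelogram hβ]

end StrMono

namespace RPR

variable {A B : X → Set X} {β γ θ : ℝ} {x u v x' u' v' : ℕ → X}

lemma const_of_add_eq_zero {p a b : X} (ha : a ∈ A p) (hb : b ∈ B p) (hab : a + b = 0) :
    RPR A B γ θ (fun _ => p + γ • a) (fun _ => p) (fun _ => p) where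
  resA _ _ := ⟨a, ha, (add_sub_cancel_left p (γ • a)).symm⟩
  resB _ _ := ⟨b, hb, by
    obtain rfl := eq_neg_of_add_eq_zero_right hab
    module⟩
  step _ _ := by rw [sub_self, smul_zero, add_zero]

lemma succ_eq_sub_smul (h : RPR A B γ θ x u v) (n : ℕ) :
    x (n + 1) = x n - θ • (u (n + 1) - v (n + 1)) := by
  rw [h.step (n + 1) n.succ_pos, Nat.add_sub_cancel]
  module

lemma norm_u_sub_le (h : RPR A B γ θ x u v) (h' : RPR A B γ θ x' u' v')
    (hA : StrMono β A) (hβ : 0 ≤ β) (hγ : 0 ≤ γ) (n : ℕ) :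
    ‖u (n + 1) - u' (n + 1)‖ ≤ ‖x n - x' n‖ := by
  have hcoc := (hA.smul hγ).resolvent_cocoercive
    (h.resA (n + 1) n.succ_pos) (h'.resA (n + 1) n.succ_pos)
  have hone : 1 ≤ 1 + γ * β := le_add_of_nonneg_right (by positivity)
  exact (le_mul_of_one_le_left (norm_nonneg _) hone).trans
    (mul_norm_le_norm_of_mul_norm_sq_le_inner hcoc)

lemma residual_cocoercive (h : RPR A B γ θ x u v) (h' : RPR A B γ θ x' u' v')
    (hA : StrMono β A) (hB : StrMono β B) (hβ : 0 ≤ β) (hγ : 0 ≤ γ) (n : ℕ) :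
    (1 + γ * β / 2) * ‖(u (n + 1) - v (n + 1)) - (u' (n + 1) - v' (n + 1))‖ ^ 2 ≤
      ⟪x n - x' n, (u (n + 1) - v (n + 1)) - (u' (n + 1) - v' (n + 1))⟫ :=
  (hA.smul hγ).splitting_residual_cocoercive (hB.smul hγ) (mul_nonneg hγ hβ)
    (h.resA (n + 1) n.succ_pos) (h'.resA (n + 1) n.succ_pos)
    (h.resB (n + 1) n.succ_pos) (h'.resB (n + 1) n.succ_pos)

lemma norm_residual_sub_le (h : RPR A B γ θ x u v) (h' : RPR A B γ θ x' u' v')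
    (hA : StrMono β A) (hB : StrMono β B) (hβ : 0 ≤ β) (hγ : 0 ≤ γ) (n : ℕ) :
    ‖(u (n + 1) - v (n + 1)) - (u' (n + 1) - v' (n + 1))‖ ≤ ‖x n - x' n‖ := by
  have hone : 1 ≤ 1 + γ * β / 2 := le_add_of_nonneg_right (by positivity)
  exact (le_mul_of_one_le_left (norm_nonneg _) hone).trans
    (mul_norm_le_norm_of_mul_norm_sq_le_inner (h.residual_cocoercive h' hA hB hβ hγ n))

lemma antitone_norm_sub (h : RPR A B γ θ x u v) (h' : RPR A B γ θ x' u' v')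
    (hA : StrMono β A) (hB : StrMono β B) (hβ : 0 ≤ β) (hγ : 0 ≤ γ)
    (hθ : 0 ≤ θ) (hθle : θ ≤ 2 * (1 + γ * β / 2)) :
    Antitone fun n => ‖x n - x' n‖ := by
  refine antitone_nat_of_succ_le fun n => ?_
  rw [h.succ_eq_sub_smul, h'.succ_eq_sub_smul, sub_sub_sub_comm, ← smul_sub]
  exact norm_sub_smul_le_norm_of_mul_norm_sq_le_inner
    (h.residual_cocoercive h' hA hB hβ hγ n) hθ hθle

lemma exists_norm_le_of_const {p q : X} (h : RPR A B γ θ x u v)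
    (h' : RPR A B γ θ (fun _ => q) (fun _ => p) (fun _ => p))
    (hA : StrMono β A) (hB : StrMono β B) (hβ : 0 ≤ β) (hγ : 0 ≤ γ)
    (hθ : 0 ≤ θ) (hθle : θ ≤ 2 * (1 + γ * β / 2)) :
    ∃ M, ∀ n, ‖x n‖ ≤ M ∧ ‖u (n + 1)‖ ≤ M ∧ ‖u (n + 1) - v (n + 1)‖ ≤ M := by
  have hx (n) : ‖x n - q‖ ≤ ‖x 0 - q‖ :=
    h.antitone_norm_sub h' hA hB hβ hγ hθ hθle n.zero_le
  have hu (n) : ‖u (n + 1) - p‖ ≤ ‖x 0 - q‖ := (h.norm_u_sub_le h' hA hβ hγ n).trans (hx n)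
  have hr (n) : ‖u (n + 1) - v (n + 1)‖ ≤ ‖x 0 - q‖ := by
    simpa only [sub_self, sub_zero] using
      (h.norm_residual_sub_le h' hA hB hβ hγ n).trans (hx n)
  refine ⟨‖p‖ + ‖q‖ + ‖x 0 - q‖, fun n => ⟨?_, ?_, ?_⟩⟩
  · linarith [norm_le_norm_add_norm_sub' (x n) q, hx n, norm_nonneg p]
  · linarith [norm_le_norm_add_norm_sub' (u (n + 1)) p, hu n, norm_nonneg q]
  · linarith [hr n, norm_nonneg p, norm_nonneg q]

end RPR

theorem stmt19_general {β : ℝ} (hβ : 0 ≤ β) {A B : X → Set X}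
    (hA : StrMono β A) (hB : StrMono β B)
    (hsol : ∃ p : X, ∃ a ∈ A p, ∃ b ∈ B p, a + b = 0)
    {γ θ : ℝ} (hγ : 0 ≤ γ) (hθ : 0 ≤ θ) (hθle : θ ≤ 2 * (1 + γ * β / 2))
    {x u v : ℕ → X} (h : RPR A B γ θ x u v) (τ : ℝ) :
    ∃ R : ℝ, ∀ k, 1 ≤ k →
      ‖u k‖ ≤ R ∧ ‖v k‖ ≤ R ∧ ‖x k‖ ≤ R ∧ ‖x (k - 1) + τ • (v k - u k)‖ ≤ R := by
  obtain ⟨p, a, ha, b, hb, hab⟩ := hsol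
  obtain ⟨M, hM⟩ := h.exists_norm_le_of_const (.const_of_add_eq_zero ha hb hab) hA hB hβ hγ hθ hθle
  have hM₀ : 0 ≤ M := (norm_nonneg _).trans (hM 0).1
  have hτM : 0 ≤ |τ| * M := by positivity
  refine ⟨2 * M + |τ| * M, fun k hk => ?_⟩
  obtain ⟨n, rfl⟩ := Nat.exists_eq_add_of_le' hk
  obtain ⟨hx, hu, hr⟩ := hM n
  have hv : ‖v (n + 1)‖ ≤ M + M :=
    (norm_le_norm_add_norm_sub (u (n + 1)) (v (n + 1))).trans (add_le_add hu hr)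
  have hxτ : ‖x n + τ • (v (n + 1) - u (n + 1))‖ ≤ M + |τ| * M := by
    refine norm_add_le_of_le hx ?_
    rw [norm_smul, Real.norm_eq_abs, norm_sub_rev]
    gcongr
  rw [Nat.add_sub_cancel]
  exact ⟨by linarith, by linarith, by linarith [(hM (n + 1)).1], by linarith⟩

end Trajectories

/-- Boundedness of the sequences `{(u_k, v_k, x_k)}` and
`{(u_k, v_k, x̃_k)}` generated by the relaxed PR splitting method for `θ ∈ (0, 2θ₀]`. -/
theorem stmt19 {X : Type*} [NormedAddCommGroup X] [InnerProductSpace ℝ X]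
    [FiniteDimensional ℝ X]
    (β : ℝ) (hβ : 0 ≤ β) (A B : X → Set X)
    (hA : MaxStrMono β A) (hB : MaxStrMono β B)
    (hsol : ∃ u : X, ∃ a ∈ A u, ∃ b ∈ B u, a + b = 0)
    (γ θ θ0 θt : ℝ) (hγ : 0 < γ) (hθ0 : θ0 = 1 + γ * β / 2) (hθt : θt = min θ θ0)
    (hθpos : 0 < θ) (hθle : θ ≤ 2 * θ0)
    (x u v : ℕ → X) (hpr : RPR A B γ θ x u v)
    (xt : ℕ → X) (hxt : ∀ k, xt k = x (k - 1) + θt • (v k - u k)) :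
    ∃ R : ℝ, ∀ k, 1 ≤ k → ‖u k‖ ≤ R ∧ ‖v k‖ ≤ R ∧ ‖x k‖ ≤ R ∧ ‖xt k‖ ≤ R := by
  simpa only [hxt] using
    stmt19_general hβ hA.1 hB.1 hsol hγ.le hθpos.le (hθ0 ▸ hθle) hpr θt
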